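/- arXiv:1512.02278 — 5 statements merged into one kernel-verified Lean document; each statement's English description precedes it below -/
import Mathlib

section
/- For every integer k > 1, the coefficient C_{k,1} satisfies C_{k,1} = ε_1 · Σ_{ℓ=2}^{k} A^{(0)}_{ℓ,1} · C_{k,ℓ}. -/
open Finset

/-- Product of adjacency factors along a path `ℓ → j₁ → ⋯ → jₚ → k`:
for each consecutive pair `(a, b)` in the list, a factor `A^{(a-1)}_{b,a}`. -/
def pathProd {R : Type*} [CommRing R] (A : ℕ → ℕ → ℕ → R) : List ℕ → R
  | [] => 1
  | [_] => 1
  | a :: b :: rest => A (a - 1) b a * pathProd A (b :: rest)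

/-- The quantity `𝒜_{k,ℓ}(Q)` for a subset `Q = {j₁ < ⋯ < jₚ} ⊆ {ℓ+1,…,k−1}`. -/
def calA {R : Type*} [CommRing R] (ε : ℕ → R) (A : ℕ → ℕ → ℕ → R)
    (k ℓ : ℕ) (Q : Finset ℕ) : R :=
  (ε ℓ * ∏ j ∈ Q, ε j) * pathProd A (ℓ :: ((Q.sort (· ≤ ·)) ++ [k]))

/-- The coefficients `C_{k,ℓ}`: `C_{k,k} = 1` and, for `k > ℓ`,
`C_{k,ℓ} = Σ_{Q ⊆ {ℓ+1,…,k−1}} 𝒜_{k,ℓ}(Q)`. -/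
def Cgen {R : Type*} [CommRing R] (ε : ℕ → R) (A : ℕ → ℕ → ℕ → R) (k ℓ : ℕ) : R :=
  if k = ℓ then 1 else ∑ Q ∈ (Finset.Ioo ℓ k).powerset, calA ε A k ℓ Q

/-- The modified weight `λ̂ₖ = Σ_{ℓ=1}^{k} C_{k,ℓ} λ_ℓ`. -/
def lamHat {R : Type*} [CommRing R] (ε : ℕ → R) (A : ℕ → ℕ → ℕ → R)
    (lam : ℕ → R) (k : ℕ) : R :=
  ∑ ℓ ∈ Finset.Icc 1 k, Cgen ε A k ℓ * lam ℓ

theorem Finset.sum_powerset_Ioo_eq_sum_min {M : Type*} [AddCommMonoid M] (f : Finset ℕ → M)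
    (m k : ℕ) :
    ∑ Q ∈ (Ioo m k).powerset, f Q =
      f ∅ + ∑ ℓ ∈ Ioo m k, ∑ Q ∈ (Ioo ℓ k).powerset, f (insert ℓ Q) := by
  by_cases h : m + 1 < k
  · have hI : Ioo m k = insert (m + 1) (Ioo (m + 1) k) := by
      ext x
      simp only [mem_Ioo, mem_insert]
      omega
    rw [hI, sum_powerset_insert (by simp), sum_insert (by simp),
      sum_powerset_Ioo_eq_sum_min f (m + 1) k]
    abel
  · have hI : Ioo m k = ∅ := by
      ext x
      simp only [mem_Ioo, notMem_empty, iff_false]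
      omega
    simp [hI]
termination_by k - m

theorem calA_empty {R : Type*} [CommRing R] (ε : ℕ → R) (A : ℕ → ℕ → ℕ → R) (k m : ℕ) :
    calA ε A k m ∅ = ε m * A (m - 1) k m := by
  simp [calA, pathProd]

theorem calA_insert {R : Type*} [CommRing R] (ε : ℕ → R) (A : ℕ → ℕ → ℕ → R)
    (k m ℓ : ℕ) {Q : Finset ℕ} (hQ : ∀ j ∈ Q, ℓ < j) :
    calA ε A k m (insert ℓ Q) = ε m * (A (m - 1) ℓ m * calA ε A k ℓ Q) := by
  have hℓ : ℓ ∉ Q := fun h => (hQ ℓ h).false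
  rw [calA, calA, prod_insert hℓ, sort_insert _ (fun j hj => (hQ j hj).le) hℓ,
    List.cons_append, pathProd]
  ring

theorem Cgen_recurrence {R : Type*} [CommRing R] (ε : ℕ → R) (A : ℕ → ℕ → ℕ → R)
    {m k : ℕ} (hmk : m < k) :
    Cgen ε A k m = ε m * ∑ ℓ ∈ Ioc m k, A (m - 1) ℓ m * Cgen ε A k ℓ := by
  rw [← Ioo_insert_right hmk, sum_insert (by simp), mul_add, mul_sum, Cgen, if_neg hmk.ne',
    sum_powerset_Ioo_eq_sum_min, calA_empty]
  congr 1
  · simp [Cgen]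
  · refine sum_congr rfl fun ℓ hℓ => ?_
    rw [Cgen, if_neg (mem_Ioo.mp hℓ).2.ne', mul_sum, mul_sum]
    refine sum_congr rfl fun Q hQ => calA_insert ε A k m ℓ fun j hj => ?_
    exact (mem_Ioo.mp (mem_powerset.mp hQ hj)).1

/-- For every integer `k > 1`,
`C_{k,1} = ε₁ · Σ_{ℓ=2}^{k} A^{(0)}_{ℓ,1} · C_{k,ℓ}`. -/
theorem C_k1_recurrence {R : Type*} [CommRing R] (ε : ℕ → R) (A : ℕ → ℕ → ℕ → R)
    (k : ℕ) (hk : 1 < k) :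
    Cgen ε A k 1 = ε 1 * ∑ ℓ ∈ Finset.Icc 2 k, A 0 ℓ 1 * Cgen ε A k ℓ := by
  exact Cgen_recurrence ε A hk
end

section
/- Let γ_1, …, γ_n : R → R be arbitrary functions. Then ∏_{j=1}^{n} γ_j(λ̂_j) = γ_1(λ_1) · ∏_{j=2}^{n} γ_j( Σ_{ℓ=2}^{j} C_{j,ℓ} · (λ_ℓ + ε_1 A^{(0)}_{ℓ,1} λ_1) ); that is, the product of weight factors for a system on n edges equals the factor of the first edge evaluated at its bare weight times the product of factors of a reduced system on edges 2, …, n whose input weights are shifted by ε_1 A^{(0)}_{ℓ,1} λ_1. -/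
open Finset

/-- Sum over all increasing paths from `a` to `k` with interior vertices in `{m+1,…,k−1}`,
organised by the first vertex after `a`. -/
theorem sum_powerset_pathProd {R : Type*} [CommRing R] (ε : ℕ → R) (A : ℕ → ℕ → ℕ → R)
    (a : ℕ) {m k : ℕ} (hmk : m < k) :
    ∑ Q ∈ (Ioo m k).powerset, (∏ j ∈ Q, ε j) * pathProd A (a :: (Q.sort (· ≤ ·) ++ [k]))
      = ∑ j ∈ Ioc m k, Cgen ε A k j * A (a - 1) j a := by
  obtain ⟨d, hd⟩ : ∃ d, k = m + d + 1 := ⟨k - m - 1, by omega⟩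
  induction d generalizing m with
  | zero =>
    have hIoo : Ioo m k = ∅ := by ext; simp; omega
    have hIoc : Ioc m k = {k} := by ext; simp; omega
    simp [hIoo, hIoc, pathProd, Cgen]
  | succ d ih =>
    have hlt : m + 1 < k := by omega
    have hIoo : Ioo m k = insert (m + 1) (Ioo (m + 1) k) := by ext; simp; omega
    have hIoc : Ioc m k = insert (m + 1) (Ioc (m + 1) k) := by ext; simp; omega
    rw [hIoo, hIoc, sum_powerset_insert (by simp), sum_insert (by simp), ih hlt (by omega), add_comm,
      Cgen, if_neg hlt.ne', sum_mul]
    congr 1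
    refine sum_congr rfl fun Q hQ => ?_
    have hgt : ∀ b ∈ Q, m + 1 < b := fun b hb => (mem_Ioo.mp (mem_powerset.mp hQ hb)).1
    have hnot : m + 1 ∉ Q := fun h => (hgt _ h).false
    rw [prod_insert hnot, sort_insert _ (fun b hb => (hgt b hb).le) hnot, calA]
    simp only [List.cons_append, pathProd]
    ring

/-- First-step recursion: a coefficient `C_{k,ℓ}` decomposes over the first vertex after `ℓ`. -/
theorem Cgen_eq_sum_first_step {R : Type*} [CommRing R] (ε : ℕ → R) (A : ℕ → ℕ → ℕ → R)
    {k ℓ : ℕ} (h : ℓ < k) :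
    Cgen ε A k ℓ = ∑ j ∈ Ioc ℓ k, Cgen ε A k j * (ε ℓ * A (ℓ - 1) j ℓ) := by
  simp_rw [mul_left_comm _ (ε ℓ), ← mul_sum]
  rw [← sum_powerset_pathProd ε A ℓ h, Cgen, if_neg h.ne', mul_sum]
  simp_rw [calA, mul_assoc]

/-- For `k ≥ 2` the first weight can be absorbed into a shift of the other weights. -/
theorem lamHat_eq_sum_shifted {R : Type*} [CommRing R] (ε : ℕ → R) (A : ℕ → ℕ → ℕ → R)
    (lam : ℕ → R) {k : ℕ} (hk : 2 ≤ k) :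
    lamHat ε A lam k
      = ∑ ℓ ∈ Icc 2 k, Cgen ε A k ℓ * (lam ℓ + ε 1 * A 0 ℓ 1 * lam 1) := by
  have hIcc : Icc 1 k = insert 1 (Icc 2 k) := by ext; simp; omega
  have hIoc : Ioc 1 k = Icc 2 k := by ext; simp; omega
  rw [lamHat, hIcc, sum_insert (by simp), Cgen_eq_sum_first_step ε A hk, hIoc, sum_mul,
    ← sum_add_distrib]
  exact sum_congr rfl fun ℓ _ => by ring

/-- For arbitrary functions `γ₁, …, γₙ : R → R`,
`∏_{j=1}^{n} γⱼ(λ̂ⱼ) = γ₁(λ₁) · ∏_{j=2}^{n} γⱼ(Σ_{ℓ=2}^{j} C_{j,ℓ} · (λ_ℓ + ε₁ A^{(0)}_{ℓ,1} λ₁))`: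
the product of weight factors for a system on `n` edges equals the factor of the first edge
evaluated at its bare weight times the product of factors of a reduced system on edges
`2, …, n` whose input weights are shifted by `ε₁ A^{(0)}_{ℓ,1} λ₁`. -/
theorem prod_factors_first_edge {R : Type*} [CommRing R] (ε : ℕ → R) (A : ℕ → ℕ → ℕ → R)
    (n : ℕ) (hn : 1 ≤ n) (γ : ℕ → R → R) (lam : ℕ → R) :
    (∏ j ∈ Finset.Icc 1 n, γ j (lamHat ε A lam j))
      = γ 1 (lam 1) *
          ∏ j ∈ Finset.Icc 2 n,
            γ j (∑ ℓ ∈ Finset.Icc 2 j, Cgen ε A j ℓ * (lam ℓ + ε 1 * A 0 ℓ 1 * lam 1)) := by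
  have hIcc : Icc 1 n = insert 1 (Icc 2 n) := by ext; simp; omega
  rw [hIcc, prod_insert (by simp)]
  congr 1
  · simp [lamHat, Cgen]
  · exact prod_congr rfl fun j hj => by
      rw [lamHat_eq_sum_shifted ε A lam (mem_Icc.mp hj).1]
end

section
/- Suppose {1,…,n} = E_1 ∪ E_2 with E_1 ∩ E_2 = ∅ and: (i) there are functions κ_1 on subsets of E_1 and κ_2 on subsets of E_2 with κ(B) = κ_1(B ∩ E_1) + κ_2(B ∩ E_2) for all B ⊆ {1,…,n}; (ii) A_B^{(m)}{}_{k,ℓ} = 0 for all B and m whenever k and ℓ lie in different parts; (iii) for i = 1, 2 there are families (A^i)_{B_i}^{(m_i)} (indexed by subsets B_i ⊆ E_i and steps m_i ≥ 0, depending only on the intersection of B_i with the first m_i elements of E_i in increasing order) such that for all B ⊆ {1,…,n}, all m ≥ 0 and all k, ℓ ∈ E_i one has A_B^{(m)}{}_{k,ℓ} = (A^i)_{B ∩ E_i}^{(m_i)}{}_{k,ℓ} where m_i = |{1,…,m} ∩ E_i|. Then the order-dependent generalized Tutte polynomial factorizes: P(λ_1,…,λ_n) = P_1((λ_k)_{k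 ∈ E_1}) · P_2((λ_k)_{k ∈ E_2}), where P_i is the polynomial defined by the same construction on the index set E_i (taken in increasing order) from the data A^i, κ_i, ε, ε′, q, α, β. -/
open Finset

/-- The `B`-dependent ordering parameters: `ε^B_j = ε` if `j ∈ B` and `ε′` otherwise. -/
def epsB {R : Type*} [CommRing R] (ε ε' : R) (B : Finset ℕ) : ℕ → R :=
  fun j => if j ∈ B then ε else ε'

/-- The order-dependent generalized Tutte polynomial
`P(λ₁,…,λₙ) = Σ_{B ⊆ {1,…,n}} q^{κ(B)} ∏_{j=1}^{n} γ^j_B(λ̂_{j;B}(λ₁,…,λ_j))`,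
where `γ^j_B = α` if `j ∈ B` and `β` otherwise, and
`λ̂_{k;B} = Σ_{ℓ=1}^{k} C_{k,ℓ;B} λ_ℓ` is built from the parameters `ε^B` and the
adjacency data `A_B`. -/
def genP {R : Type*} [CommRing R] (ε ε' q : R) (α β : R → R) (n : ℕ)
    (κ : Finset ℕ → ℕ) (A : Finset ℕ → ℕ → ℕ → ℕ → R) (lam : ℕ → R) : R :=
  ∑ B ∈ (Finset.Icc 1 n).powerset, q ^ κ B *
    ∏ j ∈ Finset.Icc 1 n,
      (if j ∈ B then α else β) (lamHat (epsB ε ε' B) (A B) lam j)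

/-- The `j`-th element (1-based) of a finite set of naturals taken in increasing order. -/
def enumF (E : Finset ℕ) (j : ℕ) : ℕ := (E.sort (· ≤ ·)).getD (j - 1) 0

/-- The set of the first `m` elements of `E` in increasing order. -/
def firstElems (E : Finset ℕ) (m : ℕ) : Finset ℕ := ((E.sort (· ≤ ·)).take m).toFinset

/-- The polynomial given by the same construction on the index set `E` taken in
increasing order (relabelled to `{1,…,|E|}` via the increasing enumeration of `E`),
from the data `Ai, κi, ε, ε′, q, α, β` and the restriction of the weights `λ` to `E`. -/
def restrP {R : Type*} [CommRing R] (ε ε' q : R) (α β : R → R) (E : Finset ℕ)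
    (κi : Finset ℕ → ℕ) (Ai : Finset ℕ → ℕ → ℕ → ℕ → R) (lam : ℕ → R) : R :=
  genP ε ε' q α β E.card
    (fun B' => κi (B'.image (enumF E)))
    (fun B' m k ℓ => Ai (B'.image (enumF E)) m (enumF E k) (enumF E ℓ))
    (fun j => lam (enumF E j))

theorem enumF_eq_getElem {E : Finset ℕ} {j : ℕ} (hj : j ∈ Icc 1 #E) :
    ∃ h : j - 1 < (E.sort (· ≤ ·)).length, enumF E j = (E.sort (· ≤ ·))[j - 1] := by
  have h : j - 1 < (E.sort (· ≤ ·)).length := by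
    rw [Finset.length_sort]
    have := Finset.mem_Icc.1 hj
    omega
  exact ⟨h, List.getD_eq_getElem _ _ h⟩

/-- The increasing enumeration of `E` is strictly increasing on `{1,…,|E|}`. -/
theorem strictMonoOn_enumF (E : Finset ℕ) : StrictMonoOn (enumF E) (Icc 1 #E : Finset ℕ) := by
  intro a ha b hb hab
  obtain ⟨h1, e1⟩ := enumF_eq_getElem (Finset.mem_coe.1 ha)
  obtain ⟨h2, e2⟩ := enumF_eq_getElem (Finset.mem_coe.1 hb)
  have ha' := Finset.mem_Icc.1 (Finset.mem_coe.1 ha)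
  rw [e1, e2]
  exact List.pairwise_iff_getElem.1 (Finset.sortedLT_sort E).pairwise _ _ h1 h2 (by omega)

theorem enumF_mem {E : Finset ℕ} {j : ℕ} (hj : j ∈ Icc 1 #E) : enumF E j ∈ E := by
  obtain ⟨h, e⟩ := enumF_eq_getElem hj
  rw [e, ← Finset.mem_sort (· ≤ ·)]
  exact List.getElem_mem h

theorem image_enumF (E : Finset ℕ) : (Icc 1 #E).image (enumF E) = E := by
  apply Finset.eq_of_subset_of_card_le
  · exact Finset.image_subset_iff.2 fun j hj => enumF_mem hj
  · rw [Finset.card_image_of_injOn (strictMonoOn_enumF E).injOn]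
    simp

theorem exists_enumF_eq {E : Finset ℕ} {x : ℕ} (hx : x ∈ E) : ∃ j ∈ Icc 1 #E, enumF E j = x := by
  rw [← image_enumF E] at hx
  simpa using hx

/-- Exactly `a - 1` elements of `E` are smaller than the `a`-th one. -/
theorem card_Icc_inter_enumF {E : Finset ℕ} (hE : ∀ x ∈ E, 1 ≤ x) {a : ℕ} (ha : a ∈ Icc 1 #E) :
    #(Icc 1 (enumF E a - 1) ∩ E) = a - 1 := by
  have ha' := Finset.mem_Icc.1 ha
  have hsub : Icc 1 (a - 1) ⊆ Icc 1 #E := Finset.Icc_subset_Icc_right (by omega)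
  have h : Icc 1 (enumF E a - 1) ∩ E = (Icc 1 (a - 1)).image (enumF E) := by
    ext x
    simp only [Finset.mem_inter, Finset.mem_image, Finset.mem_Icc]
    constructor
    · rintro ⟨hx, hxE⟩
      obtain ⟨j, hj, rfl⟩ := exists_enumF_eq hxE
      have := ((strictMonoOn_enumF E).lt_iff_lt hj ha).1 (by omega)
      have := Finset.mem_Icc.1 hj
      exact ⟨j, by omega, rfl⟩
    · rintro ⟨j, hj, rfl⟩
      have hj' : j ∈ Icc 1 #E := Finset.mem_Icc.2 (by omega)
      have := strictMonoOn_enumF E hj' ha (by omega)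
      have := hE _ (enumF_mem hj')
      exact ⟨by omega, enumF_mem hj'⟩
  rw [h, Finset.card_image_of_injOn ((strictMonoOn_enumF E).injOn.mono (by exact_mod_cast hsub))]
  simp

theorem sort_image_of_strictMonoOn {f : ℕ → ℕ} {s : Finset ℕ} (hf : StrictMonoOn f s) :
    (s.image f).sort (· ≤ ·) = (s.sort (· ≤ ·)).map f := by
  have hlt : ((s.sort (· ≤ ·)).map f).Pairwise (· < ·) := by
    rw [List.pairwise_map]
    refine (Finset.sortedLT_sort s).pairwise.imp_of_mem fun ha hb hab => ?_
    exact hf (by simpa using ha) (by simpa using hb) hab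
  have hs : (s.image f) = ((s.sort (· ≤ ·)).map f).toFinset := by
    ext x
    simp
  rw [hs]
  exact (List.toFinset_sort (· ≤ ·) (hlt.imp ne_of_lt)).2 (hlt.imp le_of_lt)

section

variable {R : Type*} [CommRing R]

/-- A path with nonzero weight does not leave the part of its starting point. -/
theorem mem_iff_of_pathProd_ne_zero {D : ℕ → ℕ → ℕ → R} {S E : Finset ℕ}
    (hD : ∀ m, ∀ k ∈ S, ∀ ℓ ∈ S, ¬(k ∈ E ↔ ℓ ∈ E) → D m k ℓ = 0) {a : ℕ} {L : List ℕ}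
    (hL : ∀ x ∈ a :: L, x ∈ S) (h : pathProd D (a :: L) ≠ 0) {x : ℕ} (hx : x ∈ L) :
    x ∈ E ↔ a ∈ E := by
  induction L generalizing a with
  | nil => simp at hx
  | cons b L ih =>
    rw [pathProd] at h
    have hba : b ∈ E ↔ a ∈ E := by
      by_contra hne
      exact h (by rw [hD _ b (hL b (by simp)) a (hL a (by simp)) hne, zero_mul])
    rcases List.mem_cons.1 hx with rfl | hx
    · exact hba
    · rw [← hba]
      exact ih (fun y hy => hL y (List.mem_cons_of_mem _ hy)) (right_ne_zero_of_mul h) hx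

theorem pathProd_map {D D' : ℕ → ℕ → ℕ → R} {f : ℕ → ℕ} {T : Finset ℕ}
    (hD : ∀ a ∈ T, ∀ b ∈ T, D (f a - 1) (f b) (f a) = D' (a - 1) b a) {L : List ℕ}
    (hL : ∀ x ∈ L, x ∈ T) : pathProd D (L.map f) = pathProd D' L := by
  induction L with
  | nil => rfl
  | cons a L ih =>
    cases L with
    | nil => rfl
    | cons b L =>
      have := ih fun x hx => hL x (List.mem_cons_of_mem _ hx)
      simp only [List.map_cons, pathProd] at this ⊢
      rw [this, hD a (hL a (by simp)) b (hL b (by simp))]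

/-- `𝒜_{k,ℓ}(Q)` vanishes when some vertex of the path lies outside the part of `k`. -/
theorem calA_eq_zero {e : ℕ → R} {D : ℕ → ℕ → ℕ → R} {S E : Finset ℕ}
    (hD : ∀ m, ∀ k ∈ S, ∀ ℓ ∈ S, ¬(k ∈ E ↔ ℓ ∈ E) → D m k ℓ = 0) {k ℓ : ℕ} {Q : Finset ℕ}
    (hk : k ∈ S) (hℓ : ℓ ∈ S) (hQ : Q ⊆ S) (hkE : k ∈ E) (h : ¬(ℓ ∈ E ∧ Q ⊆ E)) :
    calA e D k ℓ Q = 0 := by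
  by_contra hne
  have hmem : ∀ x ∈ ℓ :: (Q.sort (· ≤ ·) ++ [k]), x ∈ S := by
    intro x hx
    simp only [List.mem_cons, List.mem_append, Finset.mem_sort, List.not_mem_nil, or_false] at hx
    rcases hx with rfl | hx | rfl
    exacts [hℓ, hQ hx, hk]
  have key := fun x => mem_iff_of_pathProd_ne_zero hD hmem (right_ne_zero_of_mul hne) (x := x)
  have hℓE : ℓ ∈ E := (key k (by simp)).1 hkE
  exact h ⟨hℓE, fun x hx => (key x (by simp [hx])).2 hℓE⟩

/-- Relabelling along the increasing enumeration of `E` preserves the coefficients. -/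
theorem Cgen_enumF {e e' : ℕ → R} {D D' : ℕ → ℕ → ℕ → R} {n : ℕ} {E : Finset ℕ}
    (hE : E ⊆ Icc 1 n)
    (hD : ∀ m, ∀ k ∈ Icc 1 n, ∀ ℓ ∈ Icc 1 n, ¬(k ∈ E ↔ ℓ ∈ E) → D m k ℓ = 0)
    (he : ∀ a ∈ Icc 1 #E, e (enumF E a) = e' a)
    (hDD' : ∀ a ∈ Icc 1 #E, ∀ b ∈ Icc 1 #E,
      D (enumF E a - 1) (enumF E b) (enumF E a) = D' (a - 1) b a)
    {k ℓ : ℕ} (hk : k ∈ Icc 1 #E) (hℓ : ℓ ∈ Icc 1 #E) :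
    Cgen e D (enumF E k) (enumF E ℓ) = Cgen e' D' k ℓ := by
  have hmono := strictMonoOn_enumF E
  unfold Cgen
  simp only [hmono.injOn.eq_iff hk hℓ]
  split_ifs with hkl
  · rfl
  have hIoo : Ioo ℓ k ⊆ Icc 1 #E := by
    intro x hx
    simp only [Finset.mem_Icc, Finset.mem_Ioo] at *
    omega
  have hIoo' : Ioo (enumF E ℓ) (enumF E k) ⊆ Icc 1 n := by
    have h1 := Finset.mem_Icc.1 (hE (enumF_mem hk))
    intro x hx
    simp only [Finset.mem_Icc, Finset.mem_Ioo] at *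
    omega
  symm
  refine Finset.sum_of_injOn (Finset.image (enumF E)) ?_ ?_ ?_ ?_
  · intro Q hQ Q' hQ' h
    have hQ := (Finset.mem_powerset.1 hQ).trans hIoo
    have hQ' := (Finset.mem_powerset.1 hQ').trans hIoo
    have := congrArg (fun s : Finset ℕ => (s : Set ℕ)) h
    simp only [Finset.coe_image] at this
    exact_mod_cast (hmono.injOn.image_eq_image_iff (by exact_mod_cast hQ)
      (by exact_mod_cast hQ')).1 this
  · intro Q hQ
    have hQ := Finset.mem_powerset.1 hQ
    refine Finset.mem_powerset.2 (Finset.image_subset_iff.2 fun x hx => ?_)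
    have hx' := Finset.mem_Ioo.1 (hQ hx)
    exact Finset.mem_Ioo.2 ⟨hmono hℓ (hIoo (hQ hx)) hx'.1, hmono (hIoo (hQ hx)) hk hx'.2⟩
  · intro Q hQ hQn
    have hQ := Finset.mem_powerset.1 hQ
    refine calA_eq_zero hD (hE (enumF_mem hk)) (hE (enumF_mem hℓ)) (hQ.trans hIoo')
      (enumF_mem hk) fun h => hQn ⟨{x ∈ Ioo ℓ k | enumF E x ∈ Q},
        Finset.mem_coe.2 (Finset.mem_powerset.2 (Finset.filter_subset _ _)), ?_⟩
    ext y
    simp only [Finset.mem_image, Finset.mem_filter]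
    constructor
    · rintro ⟨x, ⟨-, hx⟩, rfl⟩
      exact hx
    · intro hy
      obtain ⟨x, hx, rfl⟩ := exists_enumF_eq (h.2 hy)
      have hxy := Finset.mem_Ioo.1 (hQ hy)
      exact ⟨x, ⟨Finset.mem_Ioo.2 ⟨(hmono.lt_iff_lt hℓ hx).1 hxy.1,
        (hmono.lt_iff_lt hx hk).1 hxy.2⟩, hy⟩, rfl⟩
  · intro Q hQ
    have hQ := (Finset.mem_powerset.1 hQ).trans hIoo
    have hmonoQ : StrictMonoOn (enumF E) Q := hmono.mono (by exact_mod_cast hQ)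
    have hpath := pathProd_map (L := ℓ :: (Q.sort (· ≤ ·) ++ [k])) hDD' (by
      intro x hx
      simp only [List.mem_cons, List.mem_append, Finset.mem_sort, List.not_mem_nil,
        or_false] at hx
      rcases hx with rfl | hx | rfl
      exacts [hℓ, hQ hx, hk])
    rw [calA, calA, sort_image_of_strictMonoOn hmonoQ, Finset.prod_image hmonoQ.injOn, he ℓ hℓ,
      Finset.prod_congr rfl fun x hx => he x (hQ hx), ← hpath]
    simp

/-- Relabelling along the increasing enumeration of `E` preserves the modified weights. -/
theorem lamHat_enumF {e e' : ℕ → R} {D D' : ℕ → ℕ → ℕ → R} {n : ℕ} {E : Finset ℕ}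
    (hE : E ⊆ Icc 1 n)
    (hD : ∀ m, ∀ k ∈ Icc 1 n, ∀ ℓ ∈ Icc 1 n, ¬(k ∈ E ↔ ℓ ∈ E) → D m k ℓ = 0)
    (he : ∀ a ∈ Icc 1 #E, e (enumF E a) = e' a)
    (hDD' : ∀ a ∈ Icc 1 #E, ∀ b ∈ Icc 1 #E,
      D (enumF E a - 1) (enumF E b) (enumF E a) = D' (a - 1) b a)
    (lam : ℕ → R) {k : ℕ} (hk : k ∈ Icc 1 #E) :
    lamHat e D lam (enumF E k) = lamHat e' D' (fun j => lam (enumF E j)) k := by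
  have hmono := strictMonoOn_enumF E
  have hIcc : Icc 1 k ⊆ Icc 1 #E := Finset.Icc_subset_Icc_right (Finset.mem_Icc.1 hk).2
  have hkn := hE (enumF_mem hk)
  symm
  refine Finset.sum_of_injOn (enumF E) (hmono.injOn.mono (by exact_mod_cast hIcc)) ?_ ?_ ?_
  · intro ℓ hℓ
    have hℓ := Finset.mem_coe.1 hℓ
    exact Finset.mem_Icc.2 ⟨(Finset.mem_Icc.1 (hE (enumF_mem (hIcc hℓ)))).1,
      (hmono.le_iff_le (hIcc hℓ) hk).2 (Finset.mem_Icc.1 hℓ).2⟩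
  · intro ℓ hℓ hℓn
    have hℓ' := Finset.mem_Icc.1 hℓ
    have hkn' := Finset.mem_Icc.1 hkn
    have hℓE : ℓ ∉ E := by
      intro h
      obtain ⟨j, hj, rfl⟩ := exists_enumF_eq h
      exact hℓn ⟨j, Finset.mem_coe.2 (Finset.mem_Icc.2
        ⟨(Finset.mem_Icc.1 hj).1, (hmono.le_iff_le hj hk).1 hℓ'.2⟩), rfl⟩
    have hne : enumF E k ≠ ℓ := fun h => hℓE (h ▸ enumF_mem hk)
    rw [Cgen, if_neg hne, Finset.sum_eq_zero, zero_mul]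
    intro Q hQ
    refine calA_eq_zero hD hkn (Finset.mem_Icc.2 (by omega)) ?_ (enumF_mem hk)
      fun h => hℓE h.1
    intro x hx
    have := Finset.mem_Ioo.1 (Finset.mem_powerset.1 hQ hx)
    exact Finset.mem_Icc.2 (by omega)
  · intro ℓ hℓ
    rw [Cgen_enumF hE hD he hDD' hk (hIcc hℓ)]

/-- The labels in `{1,…,|E|}` of the elements of `B ∩ E`. -/
def labels (E B : Finset ℕ) : Finset ℕ := {j ∈ Icc 1 #E | enumF E j ∈ B}

theorem mem_labels {E B : Finset ℕ} {j : ℕ} : j ∈ labels E B ↔ j ∈ Icc 1 #E ∧ enumF E j ∈ B :=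
  Finset.mem_filter

theorem image_labels (E B : Finset ℕ) : (labels E B).image (enumF E) = B ∩ E := by
  ext x
  simp only [Finset.mem_image, mem_labels, Finset.mem_inter]
  constructor
  · rintro ⟨j, ⟨hj, hB⟩, rfl⟩
    exact ⟨hB, enumF_mem hj⟩
  · rintro ⟨hB, hE⟩
    obtain ⟨j, hj, rfl⟩ := exists_enumF_eq hE
    exact ⟨j, ⟨hj, hB⟩, rfl⟩

theorem labels_of_inter_eq_image {E B s : Finset ℕ} (hs : s ⊆ Icc 1 #E)
    (h : B ∩ E = s.image (enumF E)) : labels E B = s := by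
  ext j
  rw [mem_labels]
  constructor
  · rintro ⟨hj, hB⟩
    have : enumF E j ∈ s.image (enumF E) := h ▸ Finset.mem_inter.2 ⟨hB, enumF_mem hj⟩
    obtain ⟨i, hi, hij⟩ := Finset.mem_image.1 this
    exact (strictMonoOn_enumF E).injOn (hs hi) hj hij ▸ hi
  · intro hj
    have : enumF E j ∈ B ∩ E := h ▸ Finset.mem_image_of_mem _ hj
    exact ⟨hs hj, (Finset.mem_inter.1 this).1⟩

/-- The part of the weight of `B` coming from `E`, relabelled to `{1,…,|E|}`. -/
theorem prod_lamHat_eq_prod_labels (ε ε' : R) (α β : R → R) {n : ℕ}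
    {A Ai : Finset ℕ → ℕ → ℕ → ℕ → R} {E B : Finset ℕ} (hE : E ⊆ Icc 1 n) (hB : B ⊆ Icc 1 n)
    (hzero : ∀ m, ∀ k ∈ Icc 1 n, ∀ ℓ ∈ Icc 1 n, ¬(k ∈ E ↔ ℓ ∈ E) → A B m k ℓ = 0)
    (hcomp : ∀ B ⊆ Icc 1 n, ∀ m k ℓ : ℕ, k ∈ E → ℓ ∈ E →
      A B m k ℓ = Ai (B ∩ E) #(Icc 1 m ∩ E) k ℓ) (lam : ℕ → R) :
    ∏ j ∈ E, (if j ∈ B then α else β) (lamHat (epsB ε ε' B) (A B) lam j)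
      = ∏ j ∈ Icc 1 #E, (if j ∈ labels E B then α else β)
          (lamHat (epsB ε ε' (labels E B))
            (fun m k ℓ => Ai ((labels E B).image (enumF E)) m (enumF E k) (enumF E ℓ))
            (fun j => lam (enumF E j)) j) := by
  conv_lhs => rw [← image_enumF E, Finset.prod_image (strictMonoOn_enumF E).injOn]
  have hmem : ∀ a ∈ Icc 1 #E, (enumF E a ∈ B) = (a ∈ labels E B) := fun a ha => by
    simp [mem_labels, Finset.mem_Icc.1 ha]
  refine Finset.prod_congr rfl fun j hj => ?_
  rw [lamHat_enumF (e' := epsB ε ε' (labels E B)) (D' := fun m k ℓ =>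
    Ai ((labels E B).image (enumF E)) m (enumF E k) (enumF E ℓ)) hE hzero ?_ ?_ lam hj]
  · simp only [hmem j hj]
  · intro a ha
    simp only [epsB, hmem a ha]
  · intro a ha b hb
    rw [hcomp B hB _ _ _ (enumF_mem hb) (enumF_mem ha), image_labels,
      card_Icc_inter_enumF (fun x hx => (Finset.mem_Icc.1 (hE hx)).1) ha]

end

/-- Suppose `{1,…,n} = E₁ ∪ E₂` with `E₁ ∩ E₂ = ∅` and:
(i) `κ(B) = κ₁(B ∩ E₁) + κ₂(B ∩ E₂)`;
(ii) `A_B^{(m)}{}_{k,ℓ} = 0` whenever `k` and `ℓ` lie in different parts;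
(iii) for `i = 1, 2` there are families `(Aⁱ)_{B_i}^{(m_i)}`, indexed by subsets
`B_i ⊆ E_i` and steps `m_i ≥ 0` and depending only on the intersection of `B_i` with the
first `m_i` elements of `E_i` in increasing order, such that for all `B ⊆ {1,…,n}`,
`m ≥ 0` and `k, ℓ ∈ E_i` one has `A_B^{(m)}{}_{k,ℓ} = (Aⁱ)_{B ∩ E_i}^{(m_i)}{}_{k,ℓ}`
where `m_i = |{1,…,m} ∩ E_i|`.
Then `P(λ₁,…,λₙ) = P₁((λ_k)_{k ∈ E₁}) · P₂((λ_k)_{k ∈ E₂})`, where `P_i` is the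
polynomial defined by the same construction on the index set `E_i` (in increasing order)
from the data `Aⁱ, κ_i, ε, ε′, q, α, β`. -/
theorem genP_factorization {R : Type*} [CommRing R]
    (ε ε' q : R) (α β : R → R) (n : ℕ) (hn : 1 ≤ n)
    (κ κ1 κ2 : Finset ℕ → ℕ) (A A1 A2 : Finset ℕ → ℕ → ℕ → ℕ → R)
    (E1 E2 : Finset ℕ)
    (hunion : E1 ∪ E2 = Finset.Icc 1 n) (hdisj : Disjoint E1 E2)
    (hA : ∀ (B B' : Finset ℕ) (m : ℕ),
      B ∩ Finset.Icc 1 m = B' ∩ Finset.Icc 1 m → A B m = A B' m)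
    (hκ : ∀ B ⊆ Finset.Icc 1 n, κ B = κ1 (B ∩ E1) + κ2 (B ∩ E2))
    (hzero : ∀ (B : Finset ℕ) (m k ℓ : ℕ),
      ((k ∈ E1 ∧ ℓ ∈ E2) ∨ (k ∈ E2 ∧ ℓ ∈ E1)) → A B m k ℓ = 0)
    (hA1dep : ∀ (B B' : Finset ℕ) (m : ℕ),
      B ∩ firstElems E1 m = B' ∩ firstElems E1 m → A1 B m = A1 B' m)
    (hA2dep : ∀ (B B' : Finset ℕ) (m : ℕ),
      B ∩ firstElems E2 m = B' ∩ firstElems E2 m → A2 B m = A2 B' m)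
    (hcomp1 : ∀ B ⊆ Finset.Icc 1 n, ∀ (m k ℓ : ℕ), k ∈ E1 → ℓ ∈ E1 →
      A B m k ℓ = A1 (B ∩ E1) ((Finset.Icc 1 m ∩ E1).card) k ℓ)
    (hcomp2 : ∀ B ⊆ Finset.Icc 1 n, ∀ (m k ℓ : ℕ), k ∈ E2 → ℓ ∈ E2 →
      A B m k ℓ = A2 (B ∩ E2) ((Finset.Icc 1 m ∩ E2).card) k ℓ)
    (lam : ℕ → R) :
    genP ε ε' q α β n κ A lam
      = restrP ε ε' q α β E1 κ1 A1 lam * restrP ε ε' q α β E2 κ2 A2 lam := by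
  have hE1 : E1 ⊆ Icc 1 n := hunion ▸ Finset.subset_union_left
  have hE2 : E2 ⊆ Icc 1 n := hunion ▸ Finset.subset_union_right
  have hmem : ∀ x, x ∈ Icc 1 n → (x ∈ E1 ∨ x ∈ E2) := fun x hx =>
    Finset.mem_union.1 (hunion.symm ▸ hx)
  have hnot : ∀ x, x ∈ E1 → x ∉ E2 := fun x hx => Finset.disjoint_left.1 hdisj hx
  have hz1 : ∀ B m, ∀ k ∈ Icc 1 n, ∀ ℓ ∈ Icc 1 n, ¬(k ∈ E1 ↔ ℓ ∈ E1) → A B m k ℓ = 0 :=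
    fun B m k hk ℓ hℓ h => hzero B m k ℓ (by have := hmem k hk; have := hmem ℓ hℓ; tauto)
  have hz2 : ∀ B m, ∀ k ∈ Icc 1 n, ∀ ℓ ∈ Icc 1 n, ¬(k ∈ E2 ↔ ℓ ∈ E2) → A B m k ℓ = 0 :=
    fun B m k hk ℓ hℓ h => hzero B m k ℓ (by have := hmem k hk; have := hmem ℓ hℓ; tauto)
  have himage : ∀ {E s : Finset ℕ}, s ⊆ Icc 1 #E → s.image (enumF E) ⊆ E := fun hs =>
    Finset.image_subset_iff.2 fun j hj => enumF_mem (hs hj)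
  have hlabels : ∀ E B, labels E B ∈ (Icc 1 #E).powerset := fun E B =>
    Finset.mem_powerset.2 (Finset.filter_subset _ _)
  rw [restrP, restrP, genP, genP, genP, Finset.sum_mul_sum, ← Finset.sum_product']
  refine Finset.sum_nbij' (fun B => (labels E1 B, labels E2 B))
    (fun s => s.1.image (enumF E1) ∪ s.2.image (enumF E2)) ?_ ?_ ?_ ?_ ?_
  · intro B _
    exact Finset.mem_product.2 ⟨hlabels E1 B, hlabels E2 B⟩
  · intro s hs
    obtain ⟨h1, h2⟩ := Finset.mem_product.1 hs
    exact Finset.mem_powerset.2 (Finset.union_subset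
      ((himage (Finset.mem_powerset.1 h1)).trans hE1)
      ((himage (Finset.mem_powerset.1 h2)).trans hE2))
  · intro B hB
    simp only [image_labels]
    rw [← Finset.inter_union_distrib_left, hunion]
    exact Finset.inter_eq_left.2 (Finset.mem_powerset.1 hB)
  · rintro ⟨s, t⟩ hs
    obtain ⟨h1, h2⟩ := Finset.mem_product.1 hs
    have h1 := Finset.mem_powerset.1 h1
    have h2 := Finset.mem_powerset.1 h2
    have i1 := himage h1
    have i2 := himage h2
    refine Prod.ext (labels_of_inter_eq_image h1 ?_) (labels_of_inter_eq_image h2 ?_)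
    · rw [Finset.union_inter_distrib_right, Finset.inter_eq_left.2 i1,
        Finset.disjoint_iff_inter_eq_empty.1 (hdisj.symm.mono_left i2), Finset.union_empty]
    · rw [Finset.union_inter_distrib_right, Finset.inter_eq_left.2 i2,
        Finset.disjoint_iff_inter_eq_empty.1 (hdisj.mono_left i1), Finset.empty_union]
  · intro B hB
    have hB := Finset.mem_powerset.1 hB
    rw [hκ B hB, ← hunion, Finset.prod_union hdisj,
      prod_lamHat_eq_prod_labels ε ε' α β hE1 hB (hz1 B) hcomp1,
      prod_lamHat_eq_prod_labels ε ε' α β hE2 hB (hz2 B) hcomp2, pow_add]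
    simp only [image_labels]
    ring
end

section
/- For every n ≥ 1 and all λ_1, …, λ_n ∈ R, the chain polynomial admits the spanning-subset closed form S_n(λ_1,…,λ_n) = Σ_{B ⊆ {1,…,n}} q^{n+1−|B|} · (∏_{k ∈ B} α(μ^B_k)) · (∏_{k ∉ B} β(μ^B_k)), where the modified weights are defined downward by μ^B_n = λ_n and, for 1 ≤ k < n, μ^B_k = λ_k + ε·μ^B_{k+1} if k+1 ∈ B and μ^B_k = λ_k + ε′·μ^B_{k+1} if k+1 ∉ B. -/
open Finset

/-- The chain polynomial: `S₀ = q` and, for `n ≥ 1`,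
`Sₙ(λ₁,…,λₙ) = α(λₙ)·S_{n−1}(λ₁,…,λ_{n−2}, λ_{n−1} + ε·λₙ)
             + q·β(λₙ)·S_{n−1}(λ₁,…,λ_{n−2}, λ_{n−1} + ε′·λₙ)`.
This is the ordered contraction–deletion recurrence of the generalized Tutte polynomial on
the chain graph with `n` edges and `n+1` vertices, processed from the last edge to the
first, with boundary condition `q^m` on `m` isolated vertices. -/
def Schain {R : Type*} [CommRing R] (q : R) (α β : R → R) (ε ε' : R) :
    ℕ → (ℕ → R) → R
  | 0, _ => q
  | n + 1, lam =>
      α (lam (n + 1)) *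
          Schain q α β ε ε' n (Function.update lam n (lam n + ε * lam (n + 1)))
        + q * β (lam (n + 1)) *
            Schain q α β ε ε' n (Function.update lam n (lam n + ε' * lam (n + 1)))

/-- Auxiliary downward recursion for the modified chain weights:
`νⱼ = μ^B_{n−j}`, i.e. `ν₀ = λₙ` and
`ν_{j+1} = λ_{n−(j+1)} + (ε if n−j ∈ B else ε′)·νⱼ`. -/
def nuChain {R : Type*} [CommRing R] (ε ε' : R) (n : ℕ) (B : Finset ℕ) (lam : ℕ → R) :
    ℕ → R
  | 0 => lam n
  | j + 1 => lam (n - (j + 1)) + (if n - j ∈ B then ε else ε') * nuChain ε ε' n B lam j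

/-- The modified chain weights, defined downward: `μ^B_n = λₙ` and, for `1 ≤ k < n`,
`μ^B_k = λ_k + ε·μ^B_{k+1}` if `k+1 ∈ B` and `μ^B_k = λ_k + ε′·μ^B_{k+1}` if `k+1 ∉ B`. -/
def muChain {R : Type*} [CommRing R] (ε ε' : R) (n : ℕ) (B : Finset ℕ) (lam : ℕ → R)
    (k : ℕ) : R :=
  nuChain ε ε' n B lam (n - k)

/-- Processing the last edge: below the top edge, the modified weights of the chain with `n + 1`
edges are those of the chain with `n` edges whose last weight has been shifted. -/
theorem muChain_succ {R : Type*} [CommRing R] (ε ε' : R) (n : ℕ) (B C : Finset ℕ)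
    (lam : ℕ → R) (hBC : ∀ k ≤ n, k ∈ B ↔ k ∈ C) {k : ℕ} (hk : k ≤ n) :
    muChain ε ε' (n + 1) B lam k =
      muChain ε ε' n C (Function.update lam n
        (lam n + (if n + 1 ∈ B then ε else ε') * lam (n + 1))) k := by
  have nuChain_succ : ∀ j ≤ n, nuChain ε ε' (n + 1) B lam (j + 1) =
      nuChain ε ε' n C (Function.update lam n
        (lam n + (if n + 1 ∈ B then ε else ε') * lam (n + 1))) j := by
    intro j hj
    induction j with
    | zero => simp [nuChain]
    | succ j ih =>
      have hne : n - (j + 1) ≠ n := by omega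
      rw [nuChain, ih (by omega), nuChain, Function.update_of_ne hne, Nat.add_sub_add_right,
        Nat.add_sub_add_right]
      simp only [hBC (n - j) (Nat.sub_le n j)]
  rw [muChain, muChain, Nat.succ_sub hk]
  exact nuChain_succ (n - k) (Nat.sub_le n k)

theorem muChain_self {R : Type*} [CommRing R] (ε ε' : R) (n : ℕ) (B : Finset ℕ)
    (lam : ℕ → R) : muChain ε ε' n B lam n = lam n := by
  simp [muChain, nuChain]

/-- For every `n ≥ 1` and all `λ₁, …, λₙ ∈ R`, the chain polynomial
admits the spanning-subset closed form
`Sₙ(λ₁,…,λₙ) = Σ_{B ⊆ {1,…,n}} q^{n+1−|B|} · (∏_{k∈B} α(μ^B_k)) · (∏_{k∉B} β(μ^B_k))`. -/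
theorem Schain_closed_form {R : Type*} [CommRing R]
    (q : R) (α β : R → R) (ε ε' : R) (n : ℕ) (hn : 1 ≤ n) (lam : ℕ → R) :
    Schain q α β ε ε' n lam
      = ∑ B ∈ (Finset.Icc 1 n).powerset,
          q ^ (n + 1 - B.card) * (∏ k ∈ B, α (muChain ε ε' n B lam k)) *
            ∏ k ∈ Finset.Icc 1 n \ B, β (muChain ε ε' n B lam k) := by
  clear hn
  induction n generalizing lam with
  | zero => simp [Schain]
  | succ n ih =>
    have hnot : n + 1 ∉ Icc 1 n := by simp
    have hIcc : Icc 1 (n + 1) = insert (n + 1) (Icc 1 n) :=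
      (insert_Icc_right_eq_Icc_add_one (by omega)).symm
    rw [Schain, ih, ih, hIcc, sum_powerset_insert hnot, add_comm, mul_sum, mul_sum]
    congr 1 <;> refine sum_congr rfl fun B hB => ?_
    all_goals
      have hsub : B ⊆ Icc 1 n := mem_powerset.mp hB
      have hB' : n + 1 ∉ B := fun h => hnot (hsub h)
      have hle : ∀ k ∈ B, k ≤ n := fun k hk => (mem_Icc.mp (hsub hk)).2
      have hle' : ∀ k ∈ Icc 1 n \ B, k ≤ n := fun k hk =>
        (mem_Icc.mp (mem_sdiff.mp hk).1).2
      have hcard : B.card ≤ n := by simpa using card_le_card hsub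
    · have hmu : ∀ k ≤ n, muChain ε ε' (n + 1) B lam k =
          muChain ε ε' n B (Function.update lam n (lam n + ε' * lam (n + 1))) k := fun k hk => by
        simpa [hB'] using muChain_succ ε ε' n B B lam (fun _ _ => Iff.rfl) hk
      rw [insert_sdiff_of_notMem _ hB', prod_insert (by simp), muChain_self,
        prod_congr rfl fun k hk => congrArg α (hmu k (hle k hk)),
        prod_congr rfl fun k hk => congrArg β (hmu k (hle' k hk)),
        Nat.succ_sub (show B.card ≤ n + 1 by omega), pow_succ]
      ring
    · have hmu : ∀ k ≤ n, muChain ε ε' (n + 1) (insert (n + 1) B) lam k =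
          muChain ε ε' n B (Function.update lam n (lam n + ε * lam (n + 1))) k := fun k hk => by
        have hBC : ∀ k ≤ n, k ∈ insert (n + 1) B ↔ k ∈ B := fun k hk => by
          simp [show k ≠ n + 1 by omega]
        simpa using muChain_succ ε ε' n (insert (n + 1) B) B lam hBC hk
      rw [insert_sdiff_insert, sdiff_insert_of_notMem hnot, prod_insert hB', muChain_self,
        prod_congr rfl fun k hk => congrArg α (hmu k (hle k hk)),
        prod_congr rfl fun k hk => congrArg β (hmu k (hle' k hk)),
        card_insert_of_notMem hB', Nat.add_sub_add_right]
      ring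
end

section
/- For every n ≥ 1 and all real numbers λ_1, …, λ_n such that μ^B_k ≠ 0 for every B ⊆ {1,…,n} and every 1 ≤ k ≤ n — where μ^B_n = λ_n and, for 1 ≤ k < n, μ^B_k = λ_k if k+1 ∈ B and μ^B_k = λ_k + μ^B_{k+1} if k+1 ∉ B — one has the spanning-subset closed form s_n(λ_1,…,λ_n) = Σ_{B ⊆ {1,…,n}} (∏_{k ∈ B} e^{μ^B_k}/μ^B_k) · (∏_{k ∉ B} (−1/μ^B_k)). -/
open Finset

/-- The functions governing the moments of the integrated geometric Brownian motion
in the Ito formalism: `s₀ = 1` and, for `k ≥ 1`,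
`s_k(λ₁,…,λ_k) = (e^{λ_k}/λ_k)·s_{k−1}(λ₁,…,λ_{k−1})
               − (1/λ_k)·s_{k−1}(λ₁,…,λ_{k−2}, λ_{k−1}+λ_k)`. -/
noncomputable def sGBM : ℕ → (ℕ → ℝ) → ℝ
  | 0, _ => 1
  | k + 1, lam =>
      (Real.exp (lam (k + 1)) / lam (k + 1)) * sGBM k lam
        - (1 / lam (k + 1)) * sGBM k (Function.update lam k (lam k + lam (k + 1)))

/-- Auxiliary downward recursion for the modified weights: `νⱼ = μ^B_{n−j}`, i.e.
`ν₀ = λₙ` and `ν_{j+1} = λ_{n−(j+1)}` if `n−j ∈ B`, `ν_{j+1} = λ_{n−(j+1)} + νⱼ` else. -/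
def nuGBM (n : ℕ) (B : Finset ℕ) (lam : ℕ → ℝ) : ℕ → ℝ
  | 0 => lam n
  | j + 1 =>
      if n - j ∈ B then lam (n - (j + 1)) else lam (n - (j + 1)) + nuGBM n B lam j

/-- The modified weights, defined downward: `μ^B_n = λₙ` and, for `1 ≤ k < n`,
`μ^B_k = λ_k` if `k+1 ∈ B` and `μ^B_k = λ_k + μ^B_{k+1}` if `k+1 ∉ B`. -/
def muGBM (n : ℕ) (B : Finset ℕ) (lam : ℕ → ℝ) (k : ℕ) : ℝ :=
  nuGBM n B lam (n - k)

/-- If `n + 1 ∈ B`, the top index decouples from the lower modified weights. -/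
theorem nuGBM_succ_insert (n : ℕ) (B : Finset ℕ) (lam : ℕ → ℝ) (j : ℕ) :
    nuGBM (n + 1) (insert (n + 1) B) lam (j + 1) = nuGBM n B lam j := by
  induction j with
  | zero => simp [nuGBM]
  | succ j ih =>
    have hmem : n - j ∈ insert (n + 1) B ↔ n - j ∈ B := by
      rw [Finset.mem_insert]
      exact or_iff_right (by omega)
    rw [nuGBM, ih, nuGBM, Nat.add_sub_add_right, Nat.add_sub_add_right]
    simp only [hmem]

/-- If `n + 1 ∉ B`, the top weight is absorbed into the one below it. -/
theorem nuGBM_succ_of_notMem {n : ℕ} {B : Finset ℕ} (hB : n + 1 ∉ B) (lam : ℕ → ℝ) {j : ℕ}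
    (hj : j ≤ n) :
    nuGBM (n + 1) B lam (j + 1)
      = nuGBM n B (Function.update lam n (lam n + lam (n + 1))) j := by
  induction j with
  | zero => simp [nuGBM, hB]
  | succ j ih =>
    rw [nuGBM, ih (by omega), nuGBM, Nat.add_sub_add_right, Nat.add_sub_add_right,
      Function.update_of_ne (by omega : n - (j + 1) ≠ n)]

theorem muGBM_succ_insert {n k : ℕ} (B : Finset ℕ) (lam : ℕ → ℝ) (hk : k ≤ n) :
    muGBM (n + 1) (insert (n + 1) B) lam k = muGBM n B lam k := by
  rw [muGBM, muGBM, Nat.sub_add_comm hk, nuGBM_succ_insert]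

theorem muGBM_succ_of_notMem {n k : ℕ} {B : Finset ℕ} (hB : n + 1 ∉ B) (lam : ℕ → ℝ)
    (hk : k ≤ n) :
    muGBM (n + 1) B lam k = muGBM n B (Function.update lam n (lam n + lam (n + 1))) k := by
  rw [muGBM, muGBM, Nat.sub_add_comm hk, nuGBM_succ_of_notMem hB lam (Nat.sub_le n k)]

theorem muGBM_self (n : ℕ) (B : Finset ℕ) (lam : ℕ → ℝ) : muGBM n B lam n = lam n := by
  simp [muGBM, nuGBM]

/-- The closed form holds for all weights under the convention `x / 0 = 0`. -/
theorem sGBM_eq_sum_powerset (n : ℕ) (lam : ℕ → ℝ) :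
    sGBM n lam
      = ∑ B ∈ (Finset.Icc 1 n).powerset,
          (∏ k ∈ B, Real.exp (muGBM n B lam k) / muGBM n B lam k) *
            ∏ k ∈ Finset.Icc 1 n \ B, (-1) / muGBM n B lam k := by
  induction n generalizing lam with
  | zero => simp [sGBM]
  | succ n ih =>
    have hnot : n + 1 ∉ Finset.Icc 1 n := by simp
    rw [sGBM, ih, ih, ← Finset.insert_Icc_right_eq_Icc_add_one (by omega : 1 ≤ n + 1),
      Finset.sum_powerset_insert hnot, ← neg_add_eq_sub, ← neg_mul,
      Finset.mul_sum, Finset.mul_sum]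
    congr 1 <;> refine Finset.sum_congr rfl fun B hB => ?_
    all_goals
      have hsub := Finset.mem_powerset.mp hB
      have hB' : n + 1 ∉ B := fun h => hnot (hsub h)
      have hle : ∀ k ∈ Finset.Icc 1 n, k ≤ n := fun k hk => (Finset.mem_Icc.mp hk).2
    · rw [Finset.insert_sdiff_of_notMem _ hB',
        Finset.prod_insert fun h => hnot (Finset.mem_sdiff.mp h).1, muGBM_self, neg_div,
        mul_left_comm]
      congr 1
      · exact Finset.prod_congr rfl fun k hk => by
          rw [muGBM_succ_of_notMem hB' lam (hle k (hsub hk))]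
      · congr 1
        exact Finset.prod_congr rfl fun k hk => by
          rw [muGBM_succ_of_notMem hB' lam (hle k (Finset.mem_sdiff.mp hk).1)]
    · rw [Finset.prod_insert hB', muGBM_self, Finset.insert_sdiff_insert,
        Finset.sdiff_insert_of_notMem hnot, mul_assoc]
      congr 2
      · exact Finset.prod_congr rfl fun k hk => by
          rw [muGBM_succ_insert B lam (hle k (hsub hk))]
      · exact Finset.prod_congr rfl fun k hk => by
          rw [muGBM_succ_insert B lam (hle k (Finset.mem_sdiff.mp hk).1)]

/-- For every `n ≥ 1` and all real numbers `λ₁, …, λₙ` such that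
`μ^B_k ≠ 0` for every `B ⊆ {1,…,n}` and every `1 ≤ k ≤ n`, one has the spanning-subset
closed form
`sₙ(λ₁,…,λₙ) = Σ_{B ⊆ {1,…,n}} (∏_{k∈B} e^{μ^B_k}/μ^B_k) · (∏_{k∉B} (−1/μ^B_k))`. -/
theorem sGBM_closed_form (n : ℕ) (hn : 1 ≤ n) (lam : ℕ → ℝ)
    (hne : ∀ B ⊆ Finset.Icc 1 n, ∀ k, 1 ≤ k → k ≤ n → muGBM n B lam k ≠ 0) :
    sGBM n lam
      = ∑ B ∈ (Finset.Icc 1 n).powerset,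
          (∏ k ∈ B, Real.exp (muGBM n B lam k) / muGBM n B lam k) *
            ∏ k ∈ Finset.Icc 1 n \ B, (-1) / muGBM n B lam k := by
  exact sGBM_eq_sum_powerset n lam
end
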